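/- (Counting bases by vanishing activities, realizable case.) For every vector configuration v : Fin n → V, the number of subsets A ⊆ Fin n with θ*(A) = θ(A) = 0 equals the number of bases of the underlying matroid, i.e. the number of subsets B ⊆ Fin n such that the family (v i)_{i ∈ B} is linearly independent and span {v i : i ∈ B} = span {v i : i ∈ Fin n}. -/

import Mathlib

open Set Submodule

/-- The reorientation of the vector configuration `v` on the subset `A`:
vectors indexed by `A` are negated. -/
def reorient {n : ℕ} {V : Type*} [AddCommGroup V] (v : Fin n → V) (A : Finset (Fin n)) :
    Fin n → V :=
  fun i => if i ∈ A then -v i else v i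

/-- `a` is orientation-active for the configuration `w`: it is the smallest element of a
positive circuit, i.e. there is a nonnegative linear dependence with positive coefficient
at `a` and zero coefficients below `a`. -/
def OActive {n : ℕ} {V : Type*} [AddCommGroup V] [Module ℝ V]
    (w : Fin n → V) (a : Fin n) : Prop :=
  ∃ c : Fin n → ℝ, (∀ i, 0 ≤ c i) ∧ (∑ i, c i • w i) = 0 ∧ 0 < c a ∧ ∀ i < a, c i = 0

/-- `a` is dually orientation-active for the configuration `w`: it is the smallest element of
a positive cocircuit, i.e. there is a linear functional, nonnegative on the configuration,
positive at `w a` and vanishing on the vectors below `a`. -/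
def ODualActive {n : ℕ} {V : Type*} [AddCommGroup V] [Module ℝ V]
    (w : Fin n → V) (a : Fin n) : Prop :=
  ∃ f : V →ₗ[ℝ] ℝ, (∀ i, 0 ≤ f (w i)) ∧ 0 < f (w a) ∧ ∀ i < a, f (w i) = 0

/-- `θ*(A)`: the number of elements outside `A` that are dually orientation-active for `v_A`. -/
noncomputable def thetaStar {n : ℕ} {V : Type*} [AddCommGroup V] [Module ℝ V]
    (v : Fin n → V) (A : Finset (Fin n)) : ℕ :=
  {a : Fin n | a ∉ A ∧ ODualActive (reorient v A) a}.ncard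

/-- `θ̄*(A)`: the number of elements of `A` that are dually orientation-active for `v_A`. -/
noncomputable def thetaStarBar {n : ℕ} {V : Type*} [AddCommGroup V] [Module ℝ V]
    (v : Fin n → V) (A : Finset (Fin n)) : ℕ :=
  {a : Fin n | a ∈ A ∧ ODualActive (reorient v A) a}.ncard

/-- `θ(A)`: the number of elements outside `A` that are orientation-active for `v_A`. -/
noncomputable def theta {n : ℕ} {V : Type*} [AddCommGroup V] [Module ℝ V]
    (v : Fin n → V) (A : Finset (Fin n)) : ℕ :=
  {a : Fin n | a ∉ A ∧ OActive (reorient v A) a}.ncard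

/-- `θ̄(A)`: the number of elements of `A` that are orientation-active for `v_A`. -/
noncomputable def thetaBar {n : ℕ} {V : Type*} [AddCommGroup V] [Module ℝ V]
    (v : Fin n → V) (A : Finset (Fin n)) : ℕ :=
  {a : Fin n | a ∈ A ∧ OActive (reorient v A) a}.ncard

/-- The rank of a set of indices: the dimension of the span of the corresponding vectors. -/
noncomputable def vrank {n : ℕ} {V : Type*} [AddCommGroup V] [Module ℝ V]
    (v : Fin n → V) (S : Set (Fin n)) : ℕ :=
  Module.finrank ℝ ↥(span ℝ (v '' S))

/-- The Tutte polynomial of the matroid realized by the configuration `v`: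
`t(x,y) = ∑_{A ⊆ Fin n} (x-1)^(r(E) - r(A)) * (y-1)^(|A| - r(A))`. -/
noncomputable def tutteV {n : ℕ} {V : Type*} [AddCommGroup V] [Module ℝ V]
    (v : Fin n → V) (x y : ℝ) : ℝ :=
  ∑ A : Finset (Fin n),
    (x - 1) ^ (vrank v Set.univ - vrank v ↑A) * (y - 1) ^ (A.card - vrank v ↑A)

section Aux12

/-- Vector-side activity with the coefficient of the extra vector `x` in `T`. -/
def PAct {n : ℕ} {V : Type*} [AddCommGroup V] [Module ℝ V]
    (u : Fin n → V) (x : V) (T : Set ℝ) (a : Fin n) : Prop :=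
  ∃ (c : Fin n → ℝ) (t : ℝ), t ∈ T ∧ (∀ i, 0 ≤ c i) ∧ (∑ i, c i • u i) + t • x = 0 ∧ 0 < c a ∧
    ∀ i < a, c i = 0

/-- Covector-side activity with the value at the extra vector `x` in `T`. -/
def QAct {n : ℕ} {V : Type*} [AddCommGroup V] [Module ℝ V]
    (u : Fin n → V) (x : V) (T : Set ℝ) (a : Fin n) : Prop :=
  ∃ f : V →ₗ[ℝ] ℝ, f x ∈ T ∧ (∀ i, 0 ≤ f (u i)) ∧ 0 < f (u a) ∧ ∀ i < a, f (u i) = 0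

variable {n : ℕ} {V : Type*} [AddCommGroup V] [Module ℝ V]

lemma PAct.mono {u : Fin n → V} {x : V} {S T : Set ℝ} {a : Fin n} (h : S ⊆ T)
    (hp : PAct u x S a) : PAct u x T a := by
  obtain ⟨c, t, ht, r⟩ := hp
  exact ⟨c, t, h ht, r⟩

lemma QAct.mono {u : Fin n → V} {x : V} {S T : Set ℝ} {a : Fin n} (h : S ⊆ T)
    (hp : QAct u x S a) : QAct u x T a := by
  obtain ⟨f, ht, r⟩ := hp
  exact ⟨f, h ht, r⟩

lemma PAct.univ_cases {u : Fin n → V} {x : V} {a : Fin n}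
    (hp : PAct u x univ a) : PAct u x (Ici 0) a ∨ PAct u x (Iic 0) a := by
  obtain ⟨c, t, ht, r⟩ := hp
  rcases le_total 0 t with h | h
  · exact Or.inl ⟨c, t, h, r⟩
  · exact Or.inr ⟨c, t, h, r⟩

lemma QAct.univ_cases {u : Fin n → V} {x : V} {a : Fin n}
    (hp : QAct u x univ a) : QAct u x (Ici 0) a ∨ QAct u x (Iic 0) a := by
  obtain ⟨f, ht, r⟩ := hp
  rcases le_total 0 (f x) with h | h
  · exact Or.inl ⟨f, h, r⟩
  · exact Or.inr ⟨f, h, r⟩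

lemma PAct.comb {u : Fin n → V} {x : V} {a b : Fin n}
    (hp : PAct u x (Ici 0) a) (hq : PAct u x (Iic 0) b) : PAct u x {0} a ∨ PAct u x {0} b := by
  obtain ⟨c, t, ht, h0, hs, ha, hz⟩ := hp
  obtain ⟨c', t', ht', h0', hs', ha', hz'⟩ := hq
  simp only [mem_Ici, mem_Iic] at ht ht'
  rcases ht.eq_or_lt with h | h
  · exact Or.inl ⟨c, t, h.symm, h0, hs, ha, hz⟩
  rcases ht'.eq_or_lt with h' | h'
  · exact Or.inr ⟨c', t', h', h0', hs', ha', hz'⟩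
  have key : (∑ i, ((-t') * c i + t * c' i) • u i) + (0:ℝ) • x = 0 := by
    have : (-t') • ((∑ i, c i • u i) + t • x) + t • ((∑ i, c' i • u i) + t' • x) = 0 := by
      rw [hs, hs']; simp
    rw [← this]
    simp only [add_smul, mul_smul, Finset.sum_add_distrib, ← Finset.smul_sum]
    module
  have nn : ∀ i, 0 ≤ (-t') * c i + t * c' i := fun i => by
    have := mul_nonneg (neg_nonneg.2 ht') (h0 i)
    have := mul_nonneg ht (h0' i)
    linarith
  rcases le_total a b with hab | hab
  · refine Or.inl ⟨_, 0, rfl, nn, key, ?_, fun i hi => ?_⟩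
    · have := mul_pos (neg_pos.2 h') ha
      have := mul_nonneg ht (h0' a)
      linarith
    · rw [hz i hi, hz' i (hi.trans_le hab)]; simp
  · refine Or.inr ⟨_, 0, rfl, nn, key, ?_, fun i hi => ?_⟩
    · have := mul_pos h ha'
      have := mul_nonneg (neg_nonneg.2 ht') (h0 b)
      linarith
    · rw [hz i (hi.trans_le hab), hz' i hi]; simp

lemma QAct.comb {u : Fin n → V} {x : V} {a b : Fin n}
    (hp : QAct u x (Ici 0) a) (hq : QAct u x (Iic 0) b) : QAct u x {0} a ∨ QAct u x {0} b := by
  obtain ⟨f, ht, h0, ha, hz⟩ := hp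
  obtain ⟨f', ht', h0', ha', hz'⟩ := hq
  simp only [mem_Ici, mem_Iic] at ht ht'
  rcases ht.eq_or_lt with h | h
  · exact Or.inl ⟨f, h.symm, h0, ha, hz⟩
  rcases ht'.eq_or_lt with h' | h'
  · exact Or.inr ⟨f', h', h0', ha', hz'⟩
  have ev : ∀ y, ((-f' x) • f + f x • f') y = (-f' x) * f y + f x * f' y := fun y => by simp
  have key : ((-f' x) • f + f x • f') x ∈ ({0} : Set ℝ) := by
    rw [ev, mem_singleton_iff]; ring
  have nn : ∀ i, 0 ≤ ((-f' x) • f + f x • f') (u i) := fun i => by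
    rw [ev]
    have := mul_nonneg (neg_nonneg.2 ht') (h0 i)
    have := mul_nonneg ht (h0' i)
    linarith
  rcases le_total a b with hab | hab
  · refine Or.inl ⟨_, key, nn, ?_, fun i hi => ?_⟩
    · rw [ev]
      have := mul_pos (neg_pos.2 h') ha
      have := mul_nonneg ht (h0' a)
      linarith
    · rw [ev, hz i hi, hz' i (hi.trans_le hab)]; simp
  · refine Or.inr ⟨_, key, nn, ?_, fun i hi => ?_⟩
    · rw [ev]
      have := mul_pos h ha'
      have := mul_nonneg (neg_nonneg.2 ht') (h0 b)
      linarith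
    · rw [ev, hz i (hi.trans_le hab), hz' i hi]; simp

lemma PQ_pair {u : Fin n → V} {c : Fin n → ℝ} {t : ℝ} {x : V} {f : V →ₗ[ℝ] ℝ}
    (h0 : ∀ i, 0 ≤ c i) (hs : (∑ i, c i • u i) + t • x = 0) (hf : ∀ i, 0 ≤ f (u i)) :
    t * f x ≤ 0 := by
  have := congrArg f hs
  simp only [map_add, map_sum, map_smul, smul_eq_mul, map_zero] at this
  have h2 : 0 ≤ ∑ i, c i * f (u i) := Finset.sum_nonneg fun i _ => mul_nonneg (h0 i) (hf i)
  linarith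

lemma PQ_excl_pos {u : Fin n → V} {x : V} {a b : Fin n}
    (hp : PAct u x (Ici 0) a) (hp' : ¬ PAct u x (Iic 0) a)
    (hq : QAct u x (Ici 0) b) (hq' : ¬ QAct u x (Iic 0) b) : False := by
  obtain ⟨c, t, ht, h0, hs, r⟩ := hp
  obtain ⟨f, ht', h0', r'⟩ := hq
  have h1 : 0 < t := lt_of_not_ge fun h => hp' ⟨c, t, h, h0, hs, r⟩
  have h2 : 0 < f x := lt_of_not_ge fun h => hq' ⟨f, h, h0', r'⟩
  have := PQ_pair h0 hs h0'
  nlinarith [mul_pos h1 h2]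

lemma PQ_excl_neg {u : Fin n → V} {x : V} {a b : Fin n}
    (hp : PAct u x (Iic 0) a) (hp' : ¬ PAct u x (Ici 0) a)
    (hq : QAct u x (Iic 0) b) (hq' : ¬ QAct u x (Ici 0) b) : False := by
  obtain ⟨c, t, ht, h0, hs, r⟩ := hp
  obtain ⟨f, ht', h0', r'⟩ := hq
  have h1 : t < 0 := lt_of_not_ge fun h => hp' ⟨c, t, h, h0, hs, r⟩
  have h2 : f x < 0 := lt_of_not_ge fun h => hq' ⟨f, h, h0', r'⟩
  have := PQ_pair h0 hs h0'
  nlinarith [mul_pos_of_neg_of_neg h1 h2]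

/-- No element outside `A` is active in either sense. -/
def GoodPQ (u : Fin n → V) (x : V) (A : Finset (Fin n)) (S T : Set ℝ) : Prop :=
  ¬ (∃ a ∉ A, PAct u x S a) ∧ ¬ (∃ a ∉ A, QAct u x T a)

open Classical in
lemma core12 (u : Fin n → V) (x : V) (A : Finset (Fin n)) :
    ((if GoodPQ u x A (Ici 0) (Ici 0) then 1 else 0) +
      (if GoodPQ u x A (Iic 0) (Iic 0) then 1 else 0) : ℕ) =
    (if GoodPQ u x A {0} univ then 1 else 0) + (if GoodPQ u x A univ {0} then 1 else 0) := by
  have s1 : ({0} : Set ℝ) ⊆ Ici 0 := by simp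
  have s2 : ({0} : Set ℝ) ⊆ Iic 0 := by simp
  have p0 : (∃ a ∉ A, PAct u x {0} a) ↔
      (∃ a ∉ A, PAct u x (Ici 0) a) ∧ (∃ a ∉ A, PAct u x (Iic 0) a) := by
    constructor
    · rintro ⟨a, ha, h⟩
      exact ⟨⟨a, ha, h.mono s1⟩, ⟨a, ha, h.mono s2⟩⟩
    · rintro ⟨⟨a, ha, h⟩, ⟨b, hb, h'⟩⟩
      rcases h.comb h' with h | h
      exacts [⟨a, ha, h⟩, ⟨b, hb, h⟩]
  have q0 : (∃ a ∉ A, QAct u x {0} a) ↔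
      (∃ a ∉ A, QAct u x (Ici 0) a) ∧ (∃ a ∉ A, QAct u x (Iic 0) a) := by
    constructor
    · rintro ⟨a, ha, h⟩
      exact ⟨⟨a, ha, h.mono s1⟩, ⟨a, ha, h.mono s2⟩⟩
    · rintro ⟨⟨a, ha, h⟩, ⟨b, hb, h'⟩⟩
      rcases h.comb h' with h | h
      exacts [⟨a, ha, h⟩, ⟨b, hb, h⟩]
  have pU : (∃ a ∉ A, PAct u x univ a) ↔
      (∃ a ∉ A, PAct u x (Ici 0) a) ∨ (∃ a ∉ A, PAct u x (Iic 0) a) := by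
    constructor
    · rintro ⟨a, ha, h⟩
      rcases h.univ_cases with h | h
      exacts [Or.inl ⟨a, ha, h⟩, Or.inr ⟨a, ha, h⟩]
    · rintro (⟨a, ha, h⟩ | ⟨a, ha, h⟩) <;> exact ⟨a, ha, h.mono (subset_univ _)⟩
  have qU : (∃ a ∉ A, QAct u x univ a) ↔
      (∃ a ∉ A, QAct u x (Ici 0) a) ∨ (∃ a ∉ A, QAct u x (Iic 0) a) := by
    constructor
    · rintro ⟨a, ha, h⟩
      rcases h.univ_cases with h | h
      exacts [Or.inl ⟨a, ha, h⟩, Or.inr ⟨a, ha, h⟩]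
    · rintro (⟨a, ha, h⟩ | ⟨a, ha, h⟩) <;> exact ⟨a, ha, h.mono (subset_univ _)⟩
  have e1 : ¬ ((∃ a ∉ A, PAct u x (Ici 0) a) ∧ ¬ (∃ a ∉ A, PAct u x (Iic 0) a) ∧
      (∃ a ∉ A, QAct u x (Ici 0) a) ∧ ¬ (∃ a ∉ A, QAct u x (Iic 0) a)) := by
    rintro ⟨⟨a, ha, h⟩, h1, ⟨b, hb, h2⟩, h3⟩
    exact PQ_excl_pos h (fun h' => h1 ⟨a, ha, h'⟩) h2 (fun h' => h3 ⟨b, hb, h'⟩)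
  have e2 : ¬ ((∃ a ∉ A, PAct u x (Iic 0) a) ∧ ¬ (∃ a ∉ A, PAct u x (Ici 0) a) ∧
      (∃ a ∉ A, QAct u x (Iic 0) a) ∧ ¬ (∃ a ∉ A, QAct u x (Ici 0) a)) := by
    rintro ⟨⟨a, ha, h⟩, h1, ⟨b, hb, h2⟩, h3⟩
    exact PQ_excl_neg h (fun h' => h1 ⟨a, ha, h'⟩) h2 (fun h' => h3 ⟨b, hb, h'⟩)
  unfold GoodPQ
  rw [p0, q0, pU, qU]
  by_cases h1 : (∃ a ∉ A, PAct u x (Ici 0) a) <;> by_cases h2 : (∃ a ∉ A, PAct u x (Iic 0) a) <;>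
  by_cases h3 : (∃ a ∉ A, QAct u x (Ici 0) a) <;> by_cases h4 : (∃ a ∉ A, QAct u x (Iic 0) a) <;>
  simp only [h1, h2, h3, h4] at e1 e2 ⊢ <;> simp at e1 e2 ⊢

lemma OActive_castSucc (w : Fin (n + 1) → V) (a : Fin n) :
    OActive w a.castSucc ↔ PAct (fun i : Fin n => w i.castSucc) (w (Fin.last n)) (Ici 0) a := by
  constructor
  · rintro ⟨c, h0, hs, ha, hz⟩
    refine ⟨fun i => c i.castSucc, c (Fin.last n), h0 _, fun i => h0 _, ?_, ha,
      fun i hi => hz _ (by simpa using hi)⟩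
    rw [← hs, Fin.sum_univ_castSucc]
  · rintro ⟨c, t, ht, h0, hs, ha, hz⟩
    refine ⟨Fin.snoc c t, ?_, ?_, by simpa using ha, ?_⟩
    · intro i
      refine Fin.lastCases ?_ (fun i => ?_) i
      · simpa using ht
      · simpa using h0 i
    · rw [Fin.sum_univ_castSucc]
      simpa using hs
    · intro i
      refine Fin.lastCases ?_ (fun i => ?_) i
      · intro h
        exact absurd h (not_lt.2 (Fin.le_last _))
      · intro h
        simpa using hz i (by simpa using h)

lemma OActive_last (w : Fin (n + 1) → V) :
    OActive w (Fin.last n) ↔ w (Fin.last n) = 0 := by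
  constructor
  · rintro ⟨c, h0, hs, ha, hz⟩
    rw [Fin.sum_univ_castSucc, Finset.sum_eq_zero, zero_add] at hs
    · exact (smul_eq_zero.1 hs).resolve_left ha.ne'
    · intro i _
      rw [hz _ (Fin.castSucc_lt_last i), zero_smul]
  · intro h
    refine ⟨Fin.snoc (fun _ => 0) 1, ?_, ?_, by simp, ?_⟩
    · intro i
      refine Fin.lastCases ?_ (fun i => ?_) i <;> simp
    · rw [Fin.sum_univ_castSucc]
      simp [h]
    · intro i
      refine Fin.lastCases ?_ (fun i => ?_) i <;> simp

lemma ODualActive_castSucc (w : Fin (n + 1) → V) (a : Fin n) :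
    ODualActive w a.castSucc ↔
      QAct (fun i : Fin n => w i.castSucc) (w (Fin.last n)) (Ici 0) a := by
  constructor
  · rintro ⟨f, h0, ha, hz⟩
    exact ⟨f, h0 _, fun i => h0 _, ha, fun i hi => hz _ (by simpa using hi)⟩
  · rintro ⟨f, ht, h0, ha, hz⟩
    refine ⟨f, ?_, ha, ?_⟩
    · intro i
      refine Fin.lastCases ?_ (fun i => ?_) i
      · exact ht
      · exact h0 i
    · intro i
      refine Fin.lastCases ?_ (fun i => ?_) i
      · intro h
        exact absurd h (not_lt.2 (Fin.le_last _))
      · intro h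
        exact hz i (by simpa using h)

lemma ODualActive_last (w : Fin (n + 1) → V) :
    ODualActive w (Fin.last n) ↔
      w (Fin.last n) ∉ span ℝ (range fun i : Fin n => w i.castSucc) := by
  constructor
  · rintro ⟨f, h0, ha, hz⟩ hmem
    have : span ℝ (range fun i : Fin n => w i.castSucc) ≤ LinearMap.ker f := by
      rw [span_le]
      rintro _ ⟨i, rfl⟩
      exact hz _ (Fin.castSucc_lt_last i)
    exact ha.ne' (this hmem)
  · intro h
    obtain ⟨f, hf, hk⟩ := Submodule.exists_le_ker_of_notMem h
    have hz : ∀ i : Fin n, f (w i.castSucc) = 0 := fun i => hk (subset_span ⟨i, rfl⟩)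
    refine ⟨(f (w (Fin.last n)))⁻¹ • f, ?_, by simp [hf], ?_⟩
    · intro i
      refine Fin.lastCases ?_ (fun i => ?_) i
      · simp [hf]
      · simp [hz]
    · intro i
      refine Fin.lastCases ?_ (fun i => ?_) i
      · simp
      · simp [hz]

lemma span_reorient (v : Fin n → V) (A : Finset (Fin n)) :
    span ℝ (range (reorient v A)) = span ℝ (range v) := by
  apply le_antisymm <;> rw [span_le] <;> rintro _ ⟨i, rfl⟩
  · have h : v i ∈ span ℝ (range v) := subset_span ⟨i, rfl⟩
    by_cases hi : i ∈ A <;> simp [reorient, hi, h]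
  · have h : reorient v A i ∈ span ℝ (range (reorient v A)) := subset_span ⟨i, rfl⟩
    by_cases hi : i ∈ A <;> simpa [reorient, hi] using h

lemma PAct_neg (u : Fin n → V) (x : V) (a : Fin n) :
    PAct u (-x) (Ici 0) a ↔ PAct u x (Iic 0) a := by
  constructor
  · rintro ⟨c, t, ht, h0, hs, r⟩
    exact ⟨c, -t, by simpa using ht, h0, by simpa using hs, r⟩
  · rintro ⟨c, t, ht, h0, hs, r⟩
    exact ⟨c, -t, by simpa using ht, h0, by simpa using hs, r⟩

lemma QAct_neg (u : Fin n → V) (x : V) (a : Fin n) :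
    QAct u (-x) (Ici 0) a ↔ QAct u x (Iic 0) a := by
  simp [QAct]

lemma PAct_zero (u : Fin n → V) (x : V) (a : Fin n) :
    OActive u a ↔ PAct u x {0} a := by
  simp [PAct, OActive]

lemma QAct_univ (u : Fin n → V) (x : V) (a : Fin n) :
    ODualActive u a ↔ QAct u x univ a := by
  simp [QAct, ODualActive]

lemma PAct_univ (u : Fin n → V) (x : V) (a : Fin n) :
    OActive (fun i => (span ℝ {x}).mkQ (u i)) a ↔ PAct u x univ a := by
  have key : ∀ c : Fin n → ℝ, ∑ i, c i • (span ℝ {x}).mkQ (u i) = 0 ↔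
      ∃ t : ℝ, (∑ i, c i • u i) + t • x = 0 := by
    intro c
    have : ∑ i, c i • (span ℝ {x}).mkQ (u i) = (span ℝ {x}).mkQ (∑ i, c i • u i) := by
      simp only [map_sum, map_smul]
    rw [this, mkQ_apply, Submodule.Quotient.mk_eq_zero, mem_span_singleton]
    constructor
    · rintro ⟨t, ht⟩
      exact ⟨-t, by rw [← ht]; simp⟩
    · rintro ⟨t, ht⟩
      exact ⟨-t, by rw [neg_smul]; exact (eq_neg_of_add_eq_zero_left ht).symm⟩
  unfold OActive PAct
  refine exists_congr fun c => ?_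
  rw [key]
  constructor
  · rintro ⟨h0, ⟨t, ht⟩, r⟩
    exact ⟨t, mem_univ _, h0, ht, r⟩
  · rintro ⟨t, -, h0, ht, r⟩
    exact ⟨h0, ⟨t, ht⟩, r⟩

lemma QAct_zero (u : Fin n → V) (x : V) (a : Fin n) :
    ODualActive (fun i => (span ℝ {x}).mkQ (u i)) a ↔ QAct u x {0} a := by
  constructor
  · rintro ⟨f, r⟩
    refine ⟨f.comp (span ℝ {x}).mkQ, ?_, r⟩
    have : (span ℝ {x}).mkQ x = 0 := by
      rw [mkQ_apply, Submodule.Quotient.mk_eq_zero]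
      exact mem_span_singleton_self x
    simp only [LinearMap.comp_apply, this, map_zero, mem_singleton_iff]
  · rintro ⟨f, hf, r⟩
    have hk : span ℝ {x} ≤ LinearMap.ker f := by
      rw [span_le]
      simpa using hf
    exact ⟨(span ℝ {x}).liftQ f hk, r⟩

/-- No element outside `A` is active for `v_A`. -/
def GoodA (v : Fin n → V) (A : Finset (Fin n)) : Prop :=
  ¬ (∃ a ∉ A, OActive (reorient v A) a) ∧ ¬ (∃ a ∉ A, ODualActive (reorient v A) a)

lemma goodA_iff (v : Fin n → V) (A : Finset (Fin n)) :
    (thetaStar v A = 0 ∧ theta v A = 0) ↔ GoodA v A := by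
  unfold thetaStar theta GoodA
  rw [Set.ncard_eq_zero (Set.toFinite _), Set.ncard_eq_zero (Set.toFinite _),
    Set.eq_empty_iff_forall_notMem, Set.eq_empty_iff_forall_notMem]
  simp only [Set.mem_ofPred_eq, not_exists]
  tauto

lemma goodA_del (u : Fin n → V) (x : V) (A : Finset (Fin n)) :
    GoodA u A ↔ GoodPQ (reorient u A) x A {0} univ := by
  unfold GoodA GoodPQ
  simp only [PAct_zero _ x, QAct_univ _ x]

lemma goodA_con (u : Fin n → V) (x : V) (A : Finset (Fin n)) :
    GoodA (fun i => (span ℝ {x}).mkQ (u i)) A ↔ GoodPQ (reorient u A) x A univ {0} := by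
  have : reorient (fun i => (span ℝ {x}).mkQ (u i)) A =
      fun i => (span ℝ {x}).mkQ (reorient u A i) := by
    ext i
    by_cases hi : i ∈ A <;> simp [reorient, hi]
  unfold GoodA GoodPQ
  rw [this]
  simp only [PAct_univ, QAct_zero]

lemma last_notMem (A : Finset (Fin n)) : Fin.last n ∉ A.map Fin.castSuccEmb := by
  simp [Fin.castSucc_ne_last]

lemma castSucc_mem (A : Finset (Fin n)) (i : Fin n) :
    i.castSucc ∈ A.map Fin.castSuccEmb ↔ i ∈ A := by
  simp

lemma goodA_pos (v : Fin (n + 1) → V) (A : Finset (Fin n)) :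
    GoodA v (A.map Fin.castSuccEmb) ↔ v (Fin.last n) ≠ 0 ∧
      v (Fin.last n) ∈ span ℝ (range fun i : Fin n => v i.castSucc) ∧
      GoodPQ (reorient (fun i : Fin n => v i.castSucc) A) (v (Fin.last n)) A (Ici 0) (Ici 0) := by
  have h1 : (fun i : Fin n => reorient v (A.map Fin.castSuccEmb) i.castSucc) =
      reorient (fun i : Fin n => v i.castSucc) A := by
    ext i
    simp only [reorient, castSucc_mem]
  have h2 : reorient v (A.map Fin.castSuccEmb) (Fin.last n) = v (Fin.last n) := by
    rw [reorient, if_neg (last_notMem A)]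
  unfold GoodA GoodPQ
  simp only [Fin.exists_fin_succ', OActive_castSucc, OActive_last, ODualActive_castSucc,
    ODualActive_last, h1, h2, span_reorient, castSucc_mem, last_notMem, not_false_eq_true,
    true_and, not_or, not_not, ne_eq]
  constructor
  · rintro ⟨⟨h1, h2⟩, h3, h4⟩
    exact ⟨h2, h4, h1, h3⟩
  · rintro ⟨h2, h4, h1, h3⟩
    exact ⟨⟨h1, h2⟩, h3, h4⟩

lemma goodA_neg (v : Fin (n + 1) → V) (A : Finset (Fin n)) :
    GoodA v (insert (Fin.last n) (A.map Fin.castSuccEmb)) ↔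
      GoodPQ (reorient (fun i : Fin n => v i.castSucc) A) (v (Fin.last n)) A (Iic 0) (Iic 0) := by
  have h0 : ∀ i : Fin n, i.castSucc ∈ insert (Fin.last n) (A.map Fin.castSuccEmb) ↔ i ∈ A := by
    intro i
    rw [Finset.mem_insert, castSucc_mem]
    simp [Fin.castSucc_ne_last]
  have h1 : (fun i : Fin n => reorient v (insert (Fin.last n) (A.map Fin.castSuccEmb)) i.castSucc) =
      reorient (fun i : Fin n => v i.castSucc) A := by
    ext i
    simp only [reorient, h0]
  have h2 : reorient v (insert (Fin.last n) (A.map Fin.castSuccEmb)) (Fin.last n) =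
      - v (Fin.last n) := by
    rw [reorient, if_pos (Finset.mem_insert_self _ _)]
  unfold GoodA GoodPQ
  simp only [Fin.exists_fin_succ', OActive_castSucc, ODualActive_castSucc,
    h0, h1, h2, PAct_neg, QAct_neg, Finset.mem_insert_self, not_true_eq_false, false_and, or_false]

lemma good_loop (u : Fin n → V) (A : Finset (Fin n)) :
    GoodPQ u 0 A (Iic 0) (Iic 0) ↔ GoodPQ u 0 A {0} univ := by
  have hp : ∀ a, PAct u 0 (Iic 0) a ↔ PAct u 0 {0} a := by
    intro a
    constructor
    · rintro ⟨c, t, ht, h0, hs, r⟩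
      exact ⟨c, 0, rfl, h0, by simpa using hs, r⟩
    · exact fun h => h.mono (by simp)
  have hq : ∀ a, QAct u 0 (Iic 0) a ↔ QAct u 0 univ a := by
    intro a
    simp [QAct]
  unfold GoodPQ
  simp only [hp, hq]

lemma good_coloop (u : Fin n → V) (x : V) (hx : x ∉ span ℝ (range u)) (A : Finset (Fin n)) :
    GoodPQ u x A (Iic 0) (Iic 0) ↔ GoodPQ u x A univ {0} := by
  obtain ⟨g, hg, hk⟩ := Submodule.exists_le_ker_of_notMem hx
  have hz : ∀ i : Fin n, g (u i) = 0 := fun i => hk (subset_span ⟨i, rfl⟩)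
  have hp : ∀ a, PAct u x (Iic 0) a ↔ PAct u x univ a := by
    intro a
    constructor
    · exact fun h => h.mono (by simp)
    · rintro ⟨c, t, ht, h0, hs, r⟩
      have := congrArg g hs
      simp only [map_add, map_sum, map_smul, smul_eq_mul, map_zero, hz, mul_zero,
        Finset.sum_const_zero, zero_add] at this
      have ht0 : t = 0 := (mul_eq_zero.1 this).resolve_right hg
      exact ⟨c, t, ht0.le, h0, hs, r⟩
  have hq : ∀ a, QAct u x (Iic 0) a ↔ QAct u x {0} a := by
    intro a
    constructor
    · rintro ⟨f, ht, r⟩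
      refine ⟨f - (f x / g x) • g, ?_, ?_⟩
      · simp [hg]
      · simpa [hz] using r
    · exact fun h => h.mono (by simp)
  unfold GoodPQ
  simp only [hp, hq]

/-- `B` indexes a basis. -/
def IsB (v : Fin n → V) (B : Finset (Fin n)) : Prop :=
  LinearIndependent ℝ (fun i : ↥B => v ↑i) ∧ span ℝ (v '' ↑B) = span ℝ (v '' Set.univ)

lemma linInd_cast (v : Fin (n + 1) → V) (B : Finset (Fin n)) :
    LinearIndepOn ℝ v (Fin.castSucc '' (B : Set (Fin n))) ↔
      LinearIndepOn ℝ (fun i : Fin n => v i.castSucc) (B : Set (Fin n)) :=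
  ⟨fun h => h.comp_of_image (f := Fin.castSucc) (Fin.castSucc_injective n).injOn,
    fun h => LinearIndepOn.image_of_comp Fin.castSucc v h⟩

lemma range_cast (v : Fin (n + 1) → V) :
    span ℝ (v '' univ) =
      span ℝ {v (Fin.last n)} ⊔ span ℝ (range fun i : Fin n => v i.castSucc) := by
  rw [← span_union]
  congr 1
  ext y
  simp [Fin.exists_fin_succ', or_comm, eq_comm]

lemma isB_del (v : Fin (n + 1) → V) (B : Finset (Fin n)) :
    IsB v (B.map Fin.castSuccEmb) ↔
      v (Fin.last n) ∈ span ℝ (range fun i : Fin n => v i.castSucc) ∧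
      IsB (fun i : Fin n => v i.castSucc) B := by
  have e1 : LinearIndependent ℝ (fun i : ↥(B.map Fin.castSuccEmb) => v ↑i) ↔
      LinearIndependent ℝ (fun i : ↥B => v (Fin.castSucc ↑i)) := by
    have := linInd_cast v B
    rw [← Fin.coe_castSuccEmb, ← Finset.coe_map] at this
    exact this
  have e2 : v '' ↑(B.map Fin.castSuccEmb) = (fun i : Fin n => v i.castSucc) '' (B : Set _) := by
    rw [Finset.coe_map, image_image]; rfl
  have le : span ℝ ((fun i : Fin n => v i.castSucc) '' (B : Set _)) ≤
      span ℝ (range fun i : Fin n => v i.castSucc) := span_mono (image_subset_range _ _)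
  unfold IsB
  rw [e1, e2, range_cast, image_univ]
  constructor
  · rintro ⟨h, hs⟩
    have hx : v (Fin.last n) ∈ span ℝ (range fun i : Fin n => v i.castSucc) := by
      apply le
      rw [hs]
      exact mem_sup_left (mem_span_singleton_self _)
    refine ⟨hx, h, le_antisymm le ?_⟩
    rw [hs]
    exact le_sup_right
  · rintro ⟨hx, h, hs⟩
    refine ⟨h, ?_⟩
    rw [hs, eq_comm, sup_eq_right, span_singleton_le_iff_mem]
    exact hx

lemma isB_con (v : Fin (n + 1) → V) (B : Finset (Fin n)) :
    IsB v (insert (Fin.last n) (B.map Fin.castSuccEmb)) ↔ v (Fin.last n) ≠ 0 ∧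
      IsB (fun i : Fin n => (span ℝ {v (Fin.last n)}).mkQ (v i.castSucc)) B := by
  set x := v (Fin.last n) with hx
  have cs : ((insert (Fin.last n) (B.map Fin.castSuccEmb) : Finset _) : Set (Fin (n+1))) =
      {Fin.last n} ∪ Fin.castSucc '' (B : Set (Fin n)) := by
    rw [Finset.coe_insert, Finset.coe_map]; rfl
  have e1 : LinearIndependent ℝ
        (fun i : ↥(insert (Fin.last n) (B.map Fin.castSuccEmb)) => v ↑i) ↔
      x ≠ 0 ∧ LinearIndependent ℝ (fun i : ↥B => (span ℝ {x}).mkQ (v (Fin.castSucc ↑i))) := by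
    have dj : Disjoint {Fin.last n} (Fin.castSucc '' (B : Set (Fin n))) := by
      simp [Fin.castSucc_ne_last]
    have h1 := linearIndepOn_union_iff_quotient (R := ℝ) (f := v) dj
    rw [linearIndepOn_singleton_iff, image_singleton, ← hx] at h1
    have h2 := linInd_cast (fun i => (span ℝ {x}).mkQ (v i)) B
    rw [← cs] at h1
    exact h1.trans (and_congr_right fun _ => h2)
  have e2 : v '' ↑(insert (Fin.last n) (B.map Fin.castSuccEmb)) =
      {x} ∪ (fun i : Fin n => v i.castSucc) '' (B : Set _) := by
    rw [cs, image_union, image_image, image_singleton]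
  have e3 : ∀ S : Set (Fin n), span ℝ ((fun i : Fin n => (span ℝ {x}).mkQ (v i.castSucc)) '' S) =
      (span ℝ ((fun i : Fin n => v i.castSucc) '' S)).map (span ℝ {x}).mkQ := by
    intro S
    rw [Submodule.map_span, image_image]
  unfold IsB
  rw [e1, e2, range_cast, span_union, e3, e3, and_assoc, ← hx, image_univ,
    ← comap_map_mkQ, ← comap_map_mkQ]
  refine and_congr_right fun _ => and_congr_right fun _ => ?_
  exact (comap_injective_of_surjective (mkQ_surjective _)).eq_iff

lemma sum_split {M : Type*} [AddCommMonoid M] (F : Finset (Fin (n + 1)) → M) :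
    ∑ A, F A = ∑ A : Finset (Fin n),
      (F (A.map Fin.castSuccEmb) + F (insert (Fin.last n) (A.map Fin.castSuccEmb))) := by
  have hu : (Finset.univ : Finset (Fin (n + 1))) =
      insert (Fin.last n) ((Finset.univ : Finset (Fin n)).image Fin.castSucc) := by
    ext i
    refine Fin.lastCases ?_ (fun i => ?_) i <;> simp
  have hn : Fin.last n ∉ (Finset.univ : Finset (Fin n)).image Fin.castSucc := by
    simp [Fin.castSucc_ne_last]
  rw [← Finset.powerset_univ, hu, Finset.sum_powerset_insert hn, Finset.powerset_image,
    Finset.powerset_univ, Finset.sum_add_distrib]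
  have inj : Function.Injective (Finset.image (Fin.castSucc : Fin n → Fin (n + 1))) :=
    Finset.image_injective (Fin.castSucc_injective n)
  rw [Finset.sum_image inj.injOn, Finset.sum_image inj.injOn]
  simp only [Finset.map_eq_image]
  rfl

open Classical in
lemma main12 (n : ℕ) : ∀ {V : Type*} [AddCommGroup V] [Module ℝ V] (v : Fin n → V),
    ∑ A, (if GoodA v A then 1 else 0 : ℕ) = ∑ B, (if IsB v B then 1 else 0 : ℕ) := by
  induction n with
  | zero =>
    intro V _ _ v
    refine Finset.sum_congr rfl fun A _ => ?_
    have h1 : GoodA v A := ⟨fun ⟨a, _⟩ => a.elim0, fun ⟨a, _⟩ => a.elim0⟩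
    have h2 : IsB v A := by
      refine ⟨?_, by congr 1; ext y; simp⟩
      haveI : IsEmpty ↥A := ⟨fun i => i.1.elim0⟩
      exact linearIndependent_empty_type
    simp [h1, h2]
  | succ n ih =>
    intro V _ _ v
    rw [sum_split, sum_split]
    have d := ih (fun i : Fin n => v i.castSucc)
    have c := ih (fun i : Fin n => (span ℝ {v (Fin.last n)}).mkQ (v i.castSucc))
    simp only [goodA_del _ (v (Fin.last n)), goodA_con] at d c
    simp only [goodA_pos, goodA_neg, isB_del, isB_con]
    by_cases hx : v (Fin.last n) = 0
    · simp only [hx, good_loop, zero_mem, true_and, ne_eq, not_true_eq_false, false_and,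
        if_false, add_zero, zero_add] at d ⊢
      exact d
    by_cases hs : v (Fin.last n) ∈ span ℝ (range fun i : Fin n => v i.castSucc)
    · simp only [hx, hs, ne_eq, not_false_eq_true, true_and]
      simp only [core12]
      rw [Finset.sum_add_distrib, Finset.sum_add_distrib, d, c]
    · have hs' : ∀ A, v (Fin.last n) ∉ span ℝ (range (reorient (fun i : Fin n => v i.castSucc) A)) := by
        intro A; rwa [span_reorient]
      simp only [hx, hs, ne_eq, not_false_eq_true, true_and, false_and, and_false,
        if_false, zero_add]
      rw [← c]
      refine Finset.sum_congr rfl fun A _ => ?_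
      rw [good_coloop _ _ (hs' A)]

end Aux12

/-- the number of subsets `A` with `θ*(A) = θ(A) = 0` equals the number of bases
of the underlying matroid. -/
theorem statement12 {n : ℕ} {V : Type*} [AddCommGroup V] [Module ℝ V] [FiniteDimensional ℝ V]
    (v : Fin n → V) :
    {A : Finset (Fin n) | thetaStar v A = 0 ∧ theta v A = 0}.ncard =
      {B : Finset (Fin n) | LinearIndependent ℝ (fun i : ↥B => v ↑i) ∧
        span ℝ (v '' ↑B) = span ℝ (v '' Set.univ)}.ncard := by
  classical
  have h := main12 n v
  rw [← Finset.card_filter, ← Finset.card_filter] at h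
  rw [← Set.ncard_coe_finset, ← Set.ncard_coe_finset] at h
  simp only [Finset.coe_filter, Finset.mem_univ, true_and] at h
  simp only [goodA_iff]
  exact h
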